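/- Let A be an Artin algebra, n, s ≥ 0, and M, X finitely generated A-modules. Then: (1) if X ∈ [M]_{n+1}, then Ω^s(X) ∈ [Ω^s(M)]_{n+1} and Ω^{-s}(X) ∈ [Ω^{-s}(M)]_{n+1}; (2) if Ω^{-s}(X) ∈ [M]_{n+1}, then X ∈ [Ω^s(M) ⊕ (⊕_{i=0}^{s-1} Ω^i(D(A)))]_{n+s+1}; (3) if Ω^s(X) ∈ [M]_{n+1}, then X ∈ [Ω^{-s}(M) ⊕ (⊕_{i=0}^{s-1} Ω^{-i}(A))]_{n+s+1}. -/

import Mathlib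

universe u w w₁ w₂ w₃ v v₁ v₂ v₃

open CategoryTheory Limits Pretriangulated

namespace ExtDim



variable (A : Type u) [Ring A]

/-- `X` belongs to `add M`: `X` is a direct summand of a finite direct sum of copies of `M`. -/
def MemAdd (M X : ModuleCat.{u} A) : Prop :=
  ∃ (n : ℕ) (Y : ModuleCat.{u} A), Nonempty ((↥X × ↥Y) ≃ₗ[A] (Fin n → ↥M))

/-- The operation `𝒞₁ • 𝒞₂` on classes of modules: (summands of) middle terms of short exact
sequences with outer terms in `𝒞₁` and `𝒞₂`. -/
def Bullet (C₁ C₂ : Set (ModuleCat.{u} A)) : Set (ModuleCat.{u} A) :=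
  {X | ∃ (X' M₁ M₂ : ModuleCat.{u} A), M₁ ∈ C₁ ∧ M₂ ∈ C₂ ∧
    ∃ (f : ↥M₁ →ₗ[A] (↥X × ↥X')) (g : (↥X × ↥X') →ₗ[A] ↥M₂),
      Function.Injective f ∧ Function.Surjective g ∧ LinearMap.range f = LinearMap.ker g}

/-- The class `[M]_n`. -/
def bracket (M : ModuleCat.{u} A) : ℕ → Set (ModuleCat.{u} A)
  | 0 => {X | Subsingleton X}
  | n + 1 => Bullet A {X | MemAdd A M X} (bracket M n)

/-- The extension dimension of a subcategory `𝒜` of `A`-mod: the least `m` such that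
`𝒜 ⊆ [M]_{m+1}` for some finitely generated module `M`. -/
noncomputable def extDimCat (𝒜 : Set (ModuleCat.{u} A)) : ℕ∞ :=
  sInf {m : ℕ∞ | ∃ n : ℕ, m = n ∧ ∃ M : ModuleCat.{u} A, Module.Finite A M ∧
    ∀ X ∈ 𝒜, X ∈ bracket A M (n + 1)}

/-- The subcategory of finitely generated modules, `A`-mod. -/
def fgModules : Set (ModuleCat.{u} A) := {X | Module.Finite A X}

/-- The extension dimension of the Artin algebra `A`. -/
noncomputable def extDim : ℕ∞ := extDimCat A (fgModules A)

/-- A short exact sequence `0 → X → Y → Z → 0` of modules. -/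
def SES {X Y Z : ModuleCat.{u} A} (f : ↥X →ₗ[A] ↥Y) (g : ↥Y →ₗ[A] ↥Z) : Prop :=
  Function.Injective f ∧ Function.Surjective g ∧ LinearMap.range f = LinearMap.ker g

/-- `Ω^n(A-mod)`: the subcategory of all `n`-th syzygy modules. -/
def syzygyCat : ℕ → Set (ModuleCat.{u} A)
  | 0 => fgModules A
  | n + 1 => {X | Module.Finite A X ∧ ∃ (P K : ModuleCat.{u} A),
      Module.Finite A P ∧ Module.Projective A P ∧ K ∈ syzygyCat n ∧
      ∃ (f : ↥X →ₗ[A] ↥P) (g : ↥P →ₗ[A] ↥K), SES A f g}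

/-- The `Ω`-extension dimension of `A`. -/
noncomputable def omegaExtDim : ℕ∞ := ⨅ i : ℕ, extDimCat A (syzygyCat A i)

/-- `Ω^∞(A-mod)`: modules admitting an exact sequence `0 → X → P₀ → P₁ → ⋯` with all `Pᵢ`
finitely generated projective. -/
def infSyzygyCat : Set (ModuleCat.{u} A) :=
  {X | Module.Finite A X ∧ ∃ (K P : ℕ → ModuleCat.{u} A), Nonempty (↥(K 0) ≃ₗ[A] ↥X) ∧
    ∀ i, Module.Finite A (P i) ∧ Module.Projective A (P i) ∧
      ∃ (f : ↥(K i) →ₗ[A] ↥(P i)) (g : ↥(P i) →ₗ[A] ↥(K (i + 1))), SES A f g}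

/-- `X` has projective dimension at most `n`. -/
def ProjDimLE : ModuleCat.{u} A → ℕ → Prop
  | X, 0 => Module.Projective A X
  | X, n + 1 => ∃ (K P : ModuleCat.{u} A), Module.Projective A P ∧
      (∃ (f : ↥K →ₗ[A] ↥P) (g : ↥P →ₗ[A] ↥X), SES A f g) ∧ ProjDimLE K n

/-- The projective dimension of a module, as an element of `ℕ∞`. -/
noncomputable def pdim (X : ModuleCat.{u} A) : ℕ∞ :=
  sInf {m : ℕ∞ | ∃ n : ℕ, m = n ∧ ProjDimLE A X n}

/-- `A` has finite global dimension. -/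
def HasFiniteGlobalDimension : Prop := ∃ n : ℕ, ∀ X : ModuleCat.{u} A, ProjDimLE A X n

section MinimalSyzygies

variable (A : Type u) [Ring A]

/-- `f : P → X` is a projective cover: `P` is (finitely generated) projective, `f` is
surjective and its kernel is superfluous in `P`. -/
def IsProjectiveCover {P X : ModuleCat.{u} A} (f : ↥P →ₗ[A] ↥X) : Prop :=
  Module.Finite A P ∧ Module.Projective A P ∧ Function.Surjective f ∧
  ∀ N : Submodule A ↥P, N ⊔ LinearMap.ker f = ⊤ → N = ⊤

/-- `S` is the `n`-th syzygy `Ω^n(X)`, computed via minimal projective resolutions, i.e.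
iterated kernels of projective covers. -/
def IsMinimalSyzygy : ℕ → ModuleCat.{u} A → ModuleCat.{u} A → Prop
  | 0, X, S => Nonempty (↥S ≃ₗ[A] ↥X)
  | n + 1, X, S => ∃ (P : ModuleCat.{u} A) (f : ↥P →ₗ[A] ↥X), IsProjectiveCover A f ∧
      IsMinimalSyzygy n (ModuleCat.of A ↥(LinearMap.ker f)) S

/-- `g : X → I` is an injective envelope: `I` is injective, `g` is injective and its image
is an essential submodule of `I`. -/
def IsInjectiveEnvelope {X I : ModuleCat.{u} A} (g : ↥X →ₗ[A] ↥I) : Prop :=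
  Module.Injective A ↥I ∧ Function.Injective g ∧
  ∀ N : Submodule A ↥I, N ≠ ⊥ → N ⊓ LinearMap.range g ≠ ⊥

/-- `S` is the `n`-th cosyzygy `Ω^{-n}(X)`, computed via iterated cokernels of injective
envelopes. -/
def IsMinimalCosyzygy : ℕ → ModuleCat.{u} A → ModuleCat.{u} A → Prop
  | 0, X, S => Nonempty (↥S ≃ₗ[A] ↥X)
  | n + 1, X, S => ∃ (I : ModuleCat.{u} A) (g : ↥X →ₗ[A] ↥I), IsInjectiveEnvelope A g ∧
      IsMinimalCosyzygy n (ModuleCat.of A (↥I ⧸ LinearMap.range g)) S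

end MinimalSyzygies

section Dual

variable (k : Type u) [CommRing k] (A : Type u) [Ring A] [Algebra k A]
variable (E : Type u) [AddCommGroup E] [Module k E]

/-- The left `A`-module structure on `Hom_k(A, E)`, via the right regular action of `A` on
itself: `(a • f) x = f (x * a)`. -/
noncomputable instance dualModule : Module A (A →ₗ[k] E) :=
  { smul := fun a f => f.comp (LinearMap.mulRight k a)
    one_smul := fun f => by
      ext x
      show f (x * 1) = f x
      rw [mul_one]
    mul_smul := fun a b f => by
      ext x
      show f (x * (a * b)) = f (x * a * b)
      rw [mul_assoc]
    smul_zero := fun a => by ext x; rfl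
    smul_add := fun a f g => by ext x; rfl
    add_smul := fun a b f => by
      ext x
      show f (x * (a + b)) = f (x * a) + f (x * b)
      rw [mul_add, map_add]
    zero_smul := fun f => by
      ext x
      show f (x * 0) = 0
      rw [mul_zero, map_zero] }

end Dual

section Helpers

variable {A : Type u} [Ring A]

/-- `X` is a retract of `Y`. -/
def Retr (A : Type u) [Ring A] (X Y : Type u) [AddCommGroup X] [Module A X]
    [AddCommGroup Y] [Module A Y] : Prop :=
  ∃ (i : X →ₗ[A] Y) (p : Y →ₗ[A] X), ∀ x, p (i x) = x

section RetrLemmas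

variable {X Y Z : Type u} [AddCommGroup X] [Module A X] [AddCommGroup Y] [Module A Y]
  [AddCommGroup Z] [Module A Z]

theorem Retr.refl : Retr A X X := ⟨LinearMap.id, LinearMap.id, fun _ => rfl⟩

theorem Retr.trans (h : Retr A X Y) (h' : Retr A Y Z) : Retr A X Z := by
  obtain ⟨i, p, h⟩ := h
  obtain ⟨j, q, h'⟩ := h'
  exact ⟨j ∘ₗ i, p ∘ₗ q, fun x => by simp [h, h']⟩

theorem Retr.of_equiv (e : X ≃ₗ[A] Y) : Retr A X Y :=
  ⟨e.toLinearMap, e.symm.toLinearMap, fun x => by simp⟩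

/-- The complement of a retract. -/
theorem Retr.exists_compl (h : Retr A X Y) :
    ∃ K : Submodule A Y, Nonempty ((X × K) ≃ₗ[A] Y) := by
  obtain ⟨i, p, h⟩ := h
  refine ⟨LinearMap.ker p, ⟨?_⟩⟩
  refine LinearEquiv.ofBijective (LinearMap.coprod i (LinearMap.ker p).subtype) ⟨?_, ?_⟩
  · rw [injective_iff_map_eq_zero]
    rintro ⟨x, k, hk⟩ hx
    simp only [LinearMap.coprod_apply, Submodule.subtype_apply] at hx
    have h1 : x = 0 := by
      have := congrArg p hx
      simpa [h, LinearMap.mem_ker.1 hk] using this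
    subst h1
    simp at hx
    simp [hx]
  · intro y
    refine ⟨(p y, ⟨y - i (p y), ?_⟩), ?_⟩
    · simp [h]
    · simp

theorem Retr.pi (h : Retr A X Y) (m : ℕ) : Retr A (Fin m → X) (Fin m → Y) := by
  obtain ⟨i, p, h⟩ := h
  exact ⟨LinearMap.pi fun j => i ∘ₗ LinearMap.proj j, LinearMap.pi fun j => p ∘ₗ LinearMap.proj j,
    fun x => by ext j; simp [h]⟩

theorem Retr.pi_pi (m l : ℕ) : Retr A (Fin m → Fin l → X) (Fin (m * l) → X) := by
  refine ⟨LinearMap.pi fun j => LinearMap.proj (finProdFinEquiv.symm j).2 ∘ₗ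
      LinearMap.proj (finProdFinEquiv.symm j).1,
    LinearMap.pi fun a => LinearMap.pi fun b => LinearMap.proj (finProdFinEquiv (a, b)), ?_⟩
  intro x
  ext a b
  simp only [LinearMap.pi_apply, LinearMap.proj_apply, LinearMap.comp_apply,
    Equiv.symm_apply_apply]

theorem Retr.pi_one : Retr A X (Fin 1 → X) :=
  ⟨LinearMap.pi fun _ => LinearMap.id, LinearMap.proj 0, fun _ => rfl⟩

theorem Retr.add {W : Type u} [AddCommGroup W] [Module A W]
    (h : Retr A X Z) (h' : Retr A Y W) : Retr A (X × Y) (Z × W) := by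
  obtain ⟨i, p, h⟩ := h
  obtain ⟨j, q, h'⟩ := h'
  exact ⟨i.prodMap j, p.prodMap q, fun x => by simp [h, h']⟩

theorem Retr.fin (h : Retr A X Y) [Module.Finite A Y] : Module.Finite A X := by
  obtain ⟨i, p, h⟩ := h
  exact Module.Finite.of_surjective p (fun x => ⟨i x, h x⟩)

end RetrLemmas

theorem memAdd_iff (M X : ModuleCat.{u} A) : MemAdd A M X ↔ ∃ m, Retr A X (Fin m → M) := by
  constructor
  · rintro ⟨m, Y, ⟨e⟩⟩
    exact ⟨m, e.toLinearMap ∘ₗ LinearMap.inl A X Y, LinearMap.fst A X Y ∘ₗ e.symm.toLinearMap,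
      fun x => by simp⟩
  · rintro ⟨m, h⟩
    obtain ⟨K, ⟨e⟩⟩ := h.exists_compl
    exact ⟨m, ModuleCat.of A K, ⟨e⟩⟩

theorem bracket_succ_iff (M X : ModuleCat.{u} A) (n : ℕ) :
    X ∈ bracket A M (n + 1) ↔ ∃ (Y M₁ M₂ : ModuleCat.{u} A) (m : ℕ), Retr A X Y ∧
      Retr A M₁ (Fin m → M) ∧ M₂ ∈ bracket A M n ∧
      ∃ (f : M₁ →ₗ[A] Y) (g : Y →ₗ[A] M₂), Function.Injective f ∧ Function.Surjective g ∧
        ∀ y, g y = 0 ↔ ∃ x, f x = y := by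
  constructor
  · rintro ⟨X', M₁, M₂, h1, h2, f, g, hf, hg, hfg⟩
    obtain ⟨m, hm⟩ := (memAdd_iff _ _).1 h1
    refine ⟨ModuleCat.of A (X × X'), M₁, M₂, m, ⟨LinearMap.inl A X X', LinearMap.fst A X X',
      fun x => rfl⟩, hm, h2, f, g, hf, hg, fun y => ?_⟩
    rw [← LinearMap.mem_ker, ← hfg, LinearMap.mem_range]
  · rintro ⟨Y, M₁, M₂, m, h, h1, h2, f, g, hf, hg, hfg⟩
    obtain ⟨K, ⟨e⟩⟩ := h.exists_compl
    refine ⟨ModuleCat.of A K, M₁, M₂, (memAdd_iff _ _).2 ⟨m, h1⟩, h2,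
      e.symm.toLinearMap ∘ₗ f, g ∘ₗ e.toLinearMap, ?_, ?_, ?_⟩
    · exact e.symm.injective.comp hf
    · exact hg.comp e.surjective
    · ext y
      simp only [LinearMap.mem_range, LinearMap.mem_ker, LinearMap.comp_apply]
      erw [hfg]
      constructor
      · rintro ⟨x, rfl⟩
        exact ⟨x, (e.apply_symm_apply _).symm⟩
      · rintro ⟨x, hx⟩
        exact ⟨x, (e.symm_apply_eq).2 hx⟩

theorem bracket_retr {M X Y : ModuleCat.{u} A} {n : ℕ} (h : Retr A X Y)
    (hY : Y ∈ bracket A M n) : X ∈ bracket A M n := by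
  cases n with
  | zero =>
    obtain ⟨i, p, h⟩ := h
    have : Subsingleton Y := hY
    exact (Function.LeftInverse.injective h).subsingleton
  | succ n =>
    obtain ⟨Z, M₁, M₂, m, h', r⟩ := (bracket_succ_iff _ _ _).1 hY
    exact (bracket_succ_iff _ _ _).2 ⟨Z, M₁, M₂, m, h.trans h', r⟩

theorem bracket_gen {M M' : ModuleCat.{u} A} {l : ℕ} (h : Retr A M (Fin l → M')) {n : ℕ} :
    ∀ {X : ModuleCat.{u} A}, X ∈ bracket A M n → X ∈ bracket A M' n := by
  induction n with
  | zero => exact fun h => h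
  | succ n ih =>
    intro X hX
    obtain ⟨Z, M₁, M₂, m, h1, h2, h3, r⟩ := (bracket_succ_iff _ _ _).1 hX
    exact (bracket_succ_iff _ _ _).2 ⟨Z, M₁, M₂, m * l, h1,
      h2.trans ((h.pi m).trans (Retr.pi_pi m l)), ih h3, r⟩

theorem bracket_one {M X : ModuleCat.{u} A} {m : ℕ} (h : Retr A X (Fin m → M)) :
    X ∈ bracket A M 1 := by
  refine (bracket_succ_iff _ _ _).2 ⟨X, X, ModuleCat.of A PUnit, m, Retr.refl, h, ?_,
    LinearMap.id, 0, fun _ _ h => h, fun y => ⟨0, Subsingleton.elim _ _⟩, fun y => by simp⟩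
  show Subsingleton PUnit
  infer_instance

theorem bracket_fin {M : ModuleCat.{u} A} [Module.Finite A M] {n : ℕ} :
    ∀ {X : ModuleCat.{u} A}, X ∈ bracket A M n → Module.Finite A X := by
  induction n with
  | zero =>
    intro X hX
    have : Subsingleton X := hX
    infer_instance
  | succ n ih =>
    intro X hX
    obtain ⟨Z, M₁, M₂, m, h1, h2, h3, f, g, hf, hg, hfg⟩ := (bracket_succ_iff _ _ _).1 hX
    have := ih h3
    have := h2.fin
    have : Module.Finite A Z := by
      have hk : LinearMap.ker g = LinearMap.range f := by
        ext y
        simp [hfg]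
      have h4 : Module.Finite A (LinearMap.range f) := Module.Finite.range f
      have h5 : Module.Finite A (Z ⧸ LinearMap.range f) := by
        rw [← hk]
        exact Module.Finite.equiv (g.quotKerEquivOfSurjective hg).symm
      exact Module.Finite.of_submodule_quotient (LinearMap.range f)
    exact h1.fin

theorem bracket_ext {M : ModuleCat.{u} A} {b : ℕ} {W : ModuleCat.{u} A} (hW : W ∈ bracket A M b)
    {a : ℕ} : ∀ {X Z : ModuleCat.{u} A} (_ : X ∈ bracket A M a)
      (f : X →ₗ[A] Z) (g : Z →ₗ[A] W) (_ : Function.Injective f) (_ : Function.Surjective g)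
      (_ : ∀ z, g z = 0 ↔ ∃ x, f x = z), Z ∈ bracket A M (a + b) := by
  induction a with
  | zero =>
    intro X Z hX f g hf hg hfg
    have : Subsingleton X := hX
    have hgi : Function.Injective g := by
      rw [injective_iff_map_eq_zero]
      intro z hz
      obtain ⟨x, rfl⟩ := (hfg z).1 hz
      rw [Subsingleton.elim x 0, map_zero]
    rw [zero_add]
    exact bracket_retr (Retr.of_equiv (LinearEquiv.ofBijective g ⟨hgi, hg⟩)) hW
  | succ a ih =>
    intro X Z hX f g hf hg hfg
    obtain ⟨X', M₁, M₂, h1, h2, f', g', hf', hg', hfg'⟩ := hX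
    obtain ⟨m, hm⟩ := (memAdd_iff _ _).1 h1
    let F : (X × X') →ₗ[A] (Z × X') := f.prodMap LinearMap.id
    have hF : Function.Injective F := by
      rintro ⟨x, x'⟩ ⟨y, y'⟩ h
      simp only [F, LinearMap.prodMap_apply, Prod.mk.injEq] at h
      exact Prod.ext (hf h.1) h.2
    let N := LinearMap.range (F ∘ₗ f')
    have hN : N ≤ LinearMap.ker (g ∘ₗ LinearMap.fst A Z X') := by
      rintro _ ⟨x, rfl⟩
      simp only [LinearMap.mem_ker, LinearMap.comp_apply]
      exact (hfg _).2 ⟨_, rfl⟩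
    have hker : ∀ x, g' x = 0 ↔ ∃ y, f' y = x := fun x => by
      rw [← LinearMap.mem_ker, ← hfg', LinearMap.mem_range]
    -- the map out of the cokernel
    let φ : M₂ →ₗ[A] ((Z × X') ⧸ N) :=
      ((LinearMap.ker g').liftQ (N.mkQ ∘ₗ F) (by
        intro x hx
        obtain ⟨y, rfl⟩ := (hker x).1 hx
        simp only [LinearMap.mem_ker, LinearMap.comp_apply, Submodule.mkQ_apply,
          Submodule.Quotient.mk_eq_zero]
        exact ⟨y, rfl⟩)) ∘ₗ (g'.quotKerEquivOfSurjective hg').symm.toLinearMap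
    have hφ : ∀ x, φ (g' x) = N.mkQ (F x) := by
      intro x
      have : (g'.quotKerEquivOfSurjective hg').symm (g' x) = Submodule.Quotient.mk x := by
        rw [LinearEquiv.symm_apply_eq]
        rfl
      simp only [φ, LinearMap.comp_apply, LinearEquiv.coe_coe, this]
      rfl
    let ψ : ((Z × X') ⧸ N) →ₗ[A] W := N.liftQ (g ∘ₗ LinearMap.fst A Z X') hN
    have hψ : ∀ z, ψ (N.mkQ z) = g z.1 := fun z => rfl
    have hQ : ModuleCat.of A ((Z × X') ⧸ N) ∈ bracket A M (a + b) := by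
      refine ih h2 φ ψ ?_ ?_ ?_
      · rw [injective_iff_map_eq_zero]
        intro y hy
        obtain ⟨x, rfl⟩ := hg' y
        rw [hφ] at hy
        obtain ⟨y, hy⟩ := (Submodule.Quotient.mk_eq_zero _).1 hy
        exact (hker x).2 ⟨y, hF hy⟩
      · intro w
        obtain ⟨z, rfl⟩ := hg w
        exact ⟨N.mkQ (z, 0), rfl⟩
      · intro z
        obtain ⟨⟨z, x'⟩, rfl⟩ := N.mkQ_surjective z
        rw [hψ, hfg]
        constructor
        · rintro ⟨x, rfl⟩
          exact ⟨g' (x, x'), hφ _⟩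
        · rintro ⟨y, hy⟩
          obtain ⟨x, rfl⟩ := hg' y
          rw [hφ] at hy
          have h3 := congrArg ψ hy
          rw [hψ, hψ] at h3
          exact (hfg _).1 (h3.symm.trans ((hfg _).2 ⟨_, rfl⟩))
    rw [show a + 1 + b = (a + b) + 1 by omega]
    refine (bracket_succ_iff _ _ _).2 ⟨ModuleCat.of A (Z × X'), M₁, _, m,
      ⟨LinearMap.inl A Z X', LinearMap.fst A Z X', fun _ => rfl⟩, hm, hQ, F ∘ₗ f', N.mkQ,
      hF.comp hf', N.mkQ_surjective, ?_⟩
    intro y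
    exact Submodule.Quotient.mk_eq_zero N

section Projective

theorem retr_ker {P Q X Y : ModuleCat.{u} A} {f : P →ₗ[A] X} (hf : IsProjectiveCover A f)
    (g : Q →ₗ[A] Y) (hg : Function.Surjective g) (hQ : Module.Projective A Q)
    (h : Retr A X Y) : Retr A (LinearMap.ker f) (LinearMap.ker g) := by
  obtain ⟨i, p, hip⟩ := h
  obtain ⟨-, hP, hfs, hmin⟩ := hf
  obtain ⟨a, ha⟩ := Module.projective_lifting_property g (i ∘ₗ f) hg
  obtain ⟨b, hb⟩ := Module.projective_lifting_property f (p ∘ₗ g) hfs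
  replace ha : ∀ x, g (a x) = i (f x) := fun x => LinearMap.congr_fun ha x
  replace hb : ∀ x, f (b x) = p (g x) := fun x => LinearMap.congr_fun hb x
  have key : ∀ c : P →ₗ[A] P, (∀ x, f (c x) = f x) → Function.Surjective c := by
    intro c hc
    rw [← LinearMap.range_eq_top]
    refine hmin _ (eq_top_iff.2 fun x _ => ?_)
    rw [← add_sub_cancel (c x) x]
    exact Submodule.add_mem_sup ⟨x, rfl⟩ (by simp [hc])
  have hba : ∀ x, f (b (a x)) = f x := fun x => by rw [hb, ha, hip]
  have hs := key (b ∘ₗ a) hba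
  obtain ⟨c, hc⟩ := Module.projective_lifting_property (b ∘ₗ a) LinearMap.id hs
  replace hc : ∀ x, b (a (c x)) = x := fun x => LinearMap.congr_fun hc x
  have hfc : ∀ x, f (c x) = f x := fun x => by rw [← hba (c x), hc]
  have hcs := key c hfc
  have hca : ∀ x, c (b (a x)) = x := by
    intro x
    obtain ⟨y, rfl⟩ := hcs x
    rw [hc]
  refine ⟨LinearMap.restrict a (fun x hx => ?_), LinearMap.restrict (c ∘ₗ b) (fun x hx => ?_), ?_⟩
  · simp only [LinearMap.mem_ker] at hx ⊢
    rw [ha, hx, map_zero]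
  · simp only [LinearMap.mem_ker, LinearMap.comp_apply] at hx ⊢
    rw [hfc, hb, hx, map_zero]
  · rintro ⟨x, hx⟩
    exact Subtype.ext (hca x)

theorem exists_cover [IsArtinianRing A] (X : ModuleCat.{u} A) [Module.Finite A X] :
    ∃ (P : ModuleCat.{u} A) (f : P →ₗ[A] X), IsProjectiveCover A f := by
  obtain ⟨m, f, hf⟩ := Module.Finite.exists_fin' A X
  let S : Set (Submodule A (Fin m → A)) :=
    {N | Module.Projective A N ∧ Function.Surjective (f ∘ₗ N.subtype)}
  have hS : S.Nonempty := by
    refine ⟨⊤, ?_, ?_⟩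
    · exact Module.Projective.of_equiv (Submodule.topEquiv (R := A) (M := Fin m → A)).symm
    · intro x
      obtain ⟨y, rfl⟩ := hf x
      exact ⟨⟨y, trivial⟩, rfl⟩
  obtain ⟨N, ⟨hN1, hN2⟩, hN3⟩ := IsArtinian.set_has_minimal S hS
  refine ⟨ModuleCat.of A N, f ∘ₗ N.subtype, inferInstance, hN1, hN2, fun L hL => ?_⟩
  have hLs : Function.Surjective ((f ∘ₗ N.subtype) ∘ₗ L.subtype) := by
    intro x
    obtain ⟨y, rfl⟩ := hN2 x
    have hy : y ∈ L ⊔ LinearMap.ker (f ∘ₗ N.subtype) := by rw [hL]; trivial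
    obtain ⟨l, hl, z, hz, rfl⟩ := Submodule.mem_sup.1 hy
    refine ⟨⟨l, hl⟩, ?_⟩
    rw [map_add, LinearMap.mem_ker.1 hz, add_zero]
    rfl
  obtain ⟨h0, hh0⟩ := Module.projective_lifting_property _ (f ∘ₗ N.subtype) hLs
  let h : Module.End A N := L.subtype ∘ₗ h0
  have hh : ∀ x, f ((h x : N) : Fin m → A) = f (x : Fin m → A) :=
    fun x => LinearMap.congr_fun hh0 x
  have hhp : ∀ t x, f (((h ^ t) x : N) : Fin m → A) = f (x : Fin m → A) := by
    intro t
    induction t with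
    | zero => intro x; rfl
    | succ t ih => intro x; rw [pow_succ', Module.End.mul_apply, hh, ih]
  obtain ⟨t, ht⟩ := Filter.eventually_atTop.1 h.eventually_isCompl_ker_pow_range_pow
  have hc := ht (t + 1) (by omega)
  set K := LinearMap.range (h ^ (t + 1)) with hK
  have hKL : K ≤ L := by
    rintro _ ⟨x, rfl⟩
    rw [pow_succ', Module.End.mul_apply]
    exact (h0 _).2
  have hKp : Module.Projective A K := by
    refine Module.Projective.of_split K.subtype (Submodule.projectionOnto K _ hc.symm) ?_
    ext x
    simp
  have hmem : K.map N.subtype ∈ S := by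
    refine ⟨?_, ?_⟩
    · exact Module.Projective.of_equiv (Submodule.equivMapOfInjective N.subtype
        N.injective_subtype K)
    · intro x
      obtain ⟨y, rfl⟩ := hN2 x
      exact ⟨⟨_, (h ^ (t + 1)) y, ⟨y, rfl⟩, rfl⟩, hhp _ _⟩
  have hle : K.map N.subtype ≤ N := by
    rintro _ ⟨x, -, rfl⟩
    exact x.2
  have heq : K.map N.subtype = N := by
    by_contra hne
    exact hN3 _ hmem (lt_of_le_of_ne hle hne)
  refine eq_top_iff.2 fun x _ => hKL ?_
  have hx : (x : Fin m → A) ∈ K.map N.subtype := by rw [heq]; exact x.2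
  obtain ⟨y, hy, hyx⟩ := hx
  rw [← Subtype.ext hyx]
  exact hy

theorem ker_pi_retr {Q M : Type u} [AddCommGroup Q] [AddCommGroup M] [Module A Q] [Module A M]
    (g : Q →ₗ[A] M) (m : ℕ) :
    Retr A (LinearMap.ker (LinearMap.pi fun j : Fin m => g ∘ₗ LinearMap.proj j :
      (Fin m → Q) →ₗ[A] (Fin m → M))) (Fin m → LinearMap.ker g) := by
  refine ⟨LinearMap.pi fun j => LinearMap.restrict (LinearMap.proj j) ?_,
    LinearMap.codRestrict _ (LinearMap.pi fun j => (LinearMap.ker g).subtype ∘ₗ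
      LinearMap.proj j) ?_, ?_⟩
  · intro x hx
    exact congrFun (LinearMap.mem_ker.1 hx) j
  · intro x
    rw [LinearMap.mem_ker]
    ext j
    exact (x j).2
  · intro x
    rfl

theorem ker_bracket [IsArtinianRing A] {M Q : ModuleCat.{u} A} [Module.Finite A M]
    (g : Q →ₗ[A] M) (hg : Function.Surjective g) (hQ : Module.Projective A Q) {n : ℕ} :
    ∀ {X P : ModuleCat.{u} A} {f : P →ₗ[A] X} (_ : IsProjectiveCover A f)
      (_ : X ∈ bracket A M n),
      ModuleCat.of A (LinearMap.ker f) ∈ bracket A (ModuleCat.of A (LinearMap.ker g)) n := by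
  induction n with
  | zero =>
    intro X P f hf hX
    have : Subsingleton X := hX
    have : Retr A (LinearMap.ker f) (LinearMap.ker (0 : (PUnit : Type u) →ₗ[A] X)) := by
      refine retr_ker (Q := ModuleCat.of A PUnit) hf _ (fun x => ⟨0, Subsingleton.elim _ _⟩) ?_
        Retr.refl
      show Module.Projective A (PUnit : Type u)
      infer_instance
    obtain ⟨i, p, h⟩ := this
    exact (Function.LeftInverse.injective h).subsingleton
  | succ n ih =>
    intro X P f hf hX
    obtain ⟨Y, M₁, M₂, m, h1, h2, h3, φ, ψ, hφ, hψ, hφψ⟩ := (bracket_succ_iff _ _ _).1 hX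
    have := h2.fin
    have := bracket_fin h3
    obtain ⟨P₁, p₁, hp₁⟩ := exists_cover M₁
    obtain ⟨P₂, p₂, hp₂⟩ := exists_cover M₂
    have i2 := ih hp₂ h3
    have i1 : Retr A (LinearMap.ker p₁) (Fin m → LinearMap.ker g) := by
      refine (retr_ker (Q := ModuleCat.of A (Fin m → Q)) (Y := ModuleCat.of A (Fin m → M)) hp₁
        (LinearMap.pi fun j : Fin m => g ∘ₗ LinearMap.proj j) ?_ ?_ h2).trans (ker_pi_retr g m)
      · intro x
        choose y hy using fun j => hg (x j)
        exact ⟨y, funext hy⟩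
      · exact Module.Projective.of_equiv (DFinsupp.linearEquivFunOnFintype (R := A) (M := fun _ : Fin m => Q))
    obtain ⟨-, hP₁, hs₁, -⟩ := hp₁
    obtain ⟨-, hP₂, hs₂, -⟩ := hp₂
    obtain ⟨l, hl⟩ := Module.projective_lifting_property ψ p₂ hψ
    replace hl : ∀ x, ψ (l x) = p₂ x := fun x => LinearMap.congr_fun hl x
    let q : (P₁ × P₂) →ₗ[A] Y := LinearMap.coprod (φ ∘ₗ p₁) l
    have hq : ∀ a b, q (a, b) = φ (p₁ a) + l b := fun a b => rfl
    have hψφ : ∀ x, ψ (φ x) = 0 := fun x => (hφψ _).2 ⟨x, rfl⟩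
    have hψq : ∀ z, ψ (q z) = p₂ z.2 := fun z => by
      rw [← hl, ← z.eta, hq, map_add, hψφ, zero_add]
    have hqs : Function.Surjective q := by
      intro y
      obtain ⟨b, hb⟩ := hs₂ (ψ y)
      have : ψ (y - l b) = 0 := by rw [map_sub, hl, hb, sub_self]
      obtain ⟨c, hc⟩ := (hφψ _).1 this
      obtain ⟨a, rfl⟩ := hs₁ c
      exact ⟨(a, b), by rw [hq, hc, sub_add_cancel]⟩
    have hr : Retr A (LinearMap.ker f) (LinearMap.ker q) := by
      refine retr_ker (Q := ModuleCat.of A (P₁ × P₂)) hf q hqs ?_ h1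
      show Module.Projective A (P₁ × P₂)
      infer_instance
    refine (bracket_succ_iff _ _ _).2 ⟨ModuleCat.of A (LinearMap.ker q),
      ModuleCat.of A (LinearMap.ker p₁), ModuleCat.of A (LinearMap.ker p₂), m, hr, i1, i2,
      LinearMap.restrict (LinearMap.inl A P₁ P₂) ?_, LinearMap.restrict (LinearMap.snd A P₁ P₂) ?_,
      ?_, ?_, ?_⟩
    · intro x hx
      rw [LinearMap.mem_ker] at hx ⊢
      rw [LinearMap.inl_apply, hq, hx, map_zero, map_zero, zero_add]
    · intro x hx
      rw [LinearMap.mem_ker] at hx ⊢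
      rw [LinearMap.snd_apply, ← hψq, hx, map_zero]
    · rintro ⟨x, hx⟩ ⟨y, hy⟩ h
      exact Subtype.ext (congrArg (fun z => z.1.1) h)
    · rintro ⟨b, hb⟩
      rw [LinearMap.mem_ker] at hb
      obtain ⟨c, hc⟩ := (hφψ (l b)).1 (by rw [hl, hb])
      obtain ⟨a, rfl⟩ := hs₁ c
      refine ⟨⟨(-a, b), ?_⟩, rfl⟩
      rw [LinearMap.mem_ker, hq, map_neg, map_neg, hc, neg_add_cancel]
    · rintro ⟨⟨a, b⟩, hab⟩
      constructor
      · intro h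
        have hb : b = 0 := congrArg Subtype.val h
        subst hb
        rw [LinearMap.mem_ker, hq, map_zero, add_zero] at hab
        have ha : p₁ a = 0 := hφ (by rw [hab, map_zero])
        exact ⟨⟨a, ha⟩, rfl⟩
      · rintro ⟨x, hx⟩
        rw [← hx]
        rfl

end Projective

section Injective

theorem retr_coker {X Y I J : ModuleCat.{u} A} {f : X →ₗ[A] I} (hf : IsInjectiveEnvelope A f)
    (g : Y →ₗ[A] J) (hg : Function.Injective g) (hJ : Module.Injective A J)
    (h : Retr A X Y) : Retr A (I ⧸ LinearMap.range f) (J ⧸ LinearMap.range g) := by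
  obtain ⟨i, p, hip⟩ := h
  obtain ⟨hI, hfi, hess⟩ := hf
  obtain ⟨a, ha⟩ := hJ.out f hfi (g ∘ₗ i)
  obtain ⟨b, hb⟩ := hI.out g hg (f ∘ₗ p)
  simp only [LinearMap.comp_apply] at ha hb
  have key : ∀ c : I →ₗ[A] I, (∀ x, c (f x) = f x) → Function.Injective c := by
    intro c hc
    rw [← LinearMap.ker_eq_bot]
    by_contra hne
    refine hess _ hne (eq_bot_iff.2 ?_)
    rintro _ ⟨h1, ⟨x, rfl⟩⟩
    have h1 : c (f x) = 0 := h1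
    rw [hc] at h1
    rw [h1]
    exact Submodule.zero_mem _
  have hba : ∀ x, b (a (f x)) = f x := fun x => by rw [ha, hb, hip]
  have hs := key (b ∘ₗ a) hba
  obtain ⟨c, hc⟩ := hI.out (b ∘ₗ a) hs LinearMap.id
  replace hc : ∀ x, c (b (a x)) = x := hc
  have hfc : ∀ x, c (f x) = f x := fun x => by rw [← hba x, hc, hba]
  refine ⟨Submodule.mapQ _ _ a ?_, Submodule.mapQ _ _ (c ∘ₗ b) ?_, ?_⟩
  · rintro _ ⟨x, rfl⟩
    exact ⟨i x, (ha x).symm⟩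
  · rintro _ ⟨x, rfl⟩
    refine ⟨p x, ?_⟩
    rw [LinearMap.comp_apply, hb, hfc]
  · intro x
    obtain ⟨x, rfl⟩ := Submodule.mkQ_surjective _ x
    simp only [Submodule.mkQ_apply, Submodule.mapQ_apply, LinearMap.comp_apply, hc]

theorem Retr.inj {X Y : Type u} [AddCommGroup X] [Module A X] [AddCommGroup Y] [Module A Y]
    (h : Retr A X Y) (hY : Module.Injective A Y) : Module.Injective A X := by
  obtain ⟨i, p, hip⟩ := h
  constructor
  intro Z W _ _ _ _ f hf g
  obtain ⟨h, hh⟩ := hY.out f hf (i ∘ₗ g)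
  exact ⟨p ∘ₗ h, fun x => by simp [hh, hip]⟩

theorem exists_inj (X : ModuleCat.{u} A) :
    ∃ (J : ModuleCat.{u} A) (j : X →ₗ[A] J), Module.Injective A J ∧ Function.Injective j := by
  refine ⟨CategoryTheory.Injective.under X, (CategoryTheory.Injective.ι X).hom, ?_, ?_⟩
  · have h : CategoryTheory.Injective (CategoryTheory.Injective.under X) := inferInstance
    exact (Module.injective_iff_injective_object A _).2 h
  · exact (ModuleCat.mono_iff_injective _).1 inferInstance

theorem exists_envelope (X : ModuleCat.{u} A) :
    ∃ (I : ModuleCat.{u} A) (f : X →ₗ[A] I), IsInjectiveEnvelope A f := by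
  obtain ⟨J, j, hJ, hj⟩ := exists_inj X
  set R := LinearMap.range j with hR
  -- maximal essential extension
  let S : Set (Submodule A J) :=
    {N | R ≤ N ∧ ∀ x ∈ N, x ≠ 0 → ∃ a : A, a • x ≠ 0 ∧ a • x ∈ R}
  have hRS : R ∈ S := ⟨le_rfl, fun x hx h => ⟨1, by simpa using h, by simpa using hx⟩⟩
  obtain ⟨E, -, hE⟩ := zorn_le_nonempty₀ S (by
    intro c hc hch y hy
    refine ⟨sSup c, ⟨(hc hy).1.trans (le_sSup hy), fun x hx h => ?_⟩, fun z hz => le_sSup hz⟩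
    obtain ⟨N, hN, hxN⟩ := (Submodule.mem_sSup_of_directed ⟨y, hy⟩ hch.directedOn).1 hx
    exact (hc hN).2 x hxN h) R hRS
  -- maximal complement
  let T : Set (Submodule A J) := {N | ∀ x ∈ N, x ∈ R → x = 0}
  obtain ⟨C, -, hC⟩ := zorn_le_nonempty₀ T (by
    intro c hc hch y hy
    refine ⟨sSup c, fun x hx h => ?_, fun z hz => le_sSup hz⟩
    obtain ⟨N, hN, hxN⟩ := (Submodule.mem_sSup_of_directed ⟨y, hy⟩ hch.directedOn).1 hx
    exact hc hN x hxN h) ⊥ (fun x hx _ => by simpa using hx)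
  have hCz : ∀ z, z ∉ C → ∃ a : A, ∃ c ∈ C, c + a • z ∈ R ∧ c + a • z ≠ 0 := by
    intro z hz
    by_contra hcon
    push Not at hcon
    have hT : C ⊔ Submodule.span A {z} ∈ T := by
      intro x hx hxR
      obtain ⟨c, hc, y, hy, rfl⟩ := Submodule.mem_sup.1 hx
      obtain ⟨a, rfl⟩ := Submodule.mem_span_singleton.1 hy
      exact hcon a c hc hxR
    have hle := hC.2 hT le_sup_left
    exact hz (hle (Submodule.mem_sup_right (Submodule.mem_span_singleton_self z)))
  have hθ : Function.Injective (C.mkQ ∘ₗ E.subtype) := by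
    rw [injective_iff_map_eq_zero]
    rintro ⟨x, hx⟩ h
    have hxC : x ∈ C := (Submodule.Quotient.mk_eq_zero _).1 h
    by_contra hne
    have hx0 : x ≠ 0 := fun h => hne (Subtype.ext h)
    obtain ⟨a, ha, haR⟩ := hE.1.2 x hx hx0
    exact ha (hC.1 _ (C.smul_mem a hxC) haR)
  obtain ⟨h, hh⟩ := hJ.out _ hθ E.subtype
  replace hh : ∀ x ∈ E, h (C.mkQ x) = x := fun x hx => hh ⟨x, hx⟩
  have hEr : E ≤ LinearMap.range h := fun x hx => ⟨_, hh x hx⟩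
  have hrS : LinearMap.range h ∈ S := by
    refine ⟨hE.1.1.trans hEr, ?_⟩
    rintro _ ⟨y, rfl⟩ hy
    obtain ⟨z, rfl⟩ := C.mkQ_surjective y
    have hz : z ∉ C := fun hz => hy (by
      rw [Submodule.mkQ_apply, (Submodule.Quotient.mk_eq_zero _).2 hz, map_zero])
    obtain ⟨a, c, hc, hr, hr0⟩ := hCz z hz
    have h1 : h (C.mkQ (c + a • z)) = a • h (C.mkQ z) := by
      rw [map_add, map_add, Submodule.mkQ_apply, (Submodule.Quotient.mk_eq_zero _).2 hc, map_zero,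
        zero_add, map_smul, map_smul]
    rw [hh _ (hE.1.1 hr)] at h1
    exact ⟨a, by rwa [← h1], by rwa [← h1]⟩
  have hrE : LinearMap.range h ≤ E := hE.2 hrS hEr
  have hret : Retr A E J :=
    ⟨E.subtype, LinearMap.codRestrict E (h ∘ₗ C.mkQ) (fun x => hrE ⟨_, rfl⟩),
      fun x => Subtype.ext (hh x x.2)⟩
  refine ⟨ModuleCat.of A E, LinearMap.codRestrict E j (fun x => hE.1.1 ⟨x, rfl⟩), hret.inj hJ,
    ?_, ?_⟩
  · intro x y hxy
    exact hj (congrArg Subtype.val hxy)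
  · intro N hN hbot
    obtain ⟨x, hx, hx0⟩ := N.ne_bot_iff.1 hN
    have hx0' : (x : J) ≠ 0 := fun h => hx0 (Subtype.ext h)
    obtain ⟨a, ha, y, hy⟩ := hE.1.2 (x : J) x.2 hx0'
    have hmem : a • x ∈ N ⊓ LinearMap.range
        (LinearMap.codRestrict E j (fun x => hE.1.1 ⟨x, rfl⟩)) :=
      ⟨N.smul_mem a hx, y, Subtype.ext hy⟩
    rw [hbot] at hmem
    exact ha (congrArg Subtype.val ((Submodule.mem_bot A).1 hmem))

theorem coker_pi_retr {M J : Type u} [AddCommGroup J] [AddCommGroup M] [Module A J] [Module A M]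
    (g : M →ₗ[A] J) (m : ℕ) :
    Retr A ((Fin m → J) ⧸ LinearMap.range (LinearMap.pi fun j : Fin m => g ∘ₗ LinearMap.proj j :
      (Fin m → M) →ₗ[A] (Fin m → J))) (Fin m → J ⧸ LinearMap.range g) := by
  let ψ : (Fin m → J) →ₗ[A] (Fin m → J ⧸ LinearMap.range g) :=
    LinearMap.pi fun j => (LinearMap.range g).mkQ ∘ₗ LinearMap.proj j
  have hψ : Function.Surjective ψ := by
    intro x
    choose y hy using fun j => (LinearMap.range g).mkQ_surjective (x j)
    exact ⟨y, funext hy⟩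
  have hk : LinearMap.range (LinearMap.pi fun j : Fin m => g ∘ₗ LinearMap.proj j :
      (Fin m → M) →ₗ[A] (Fin m → J)) = LinearMap.ker ψ := by
    ext x
    constructor
    · rintro ⟨y, rfl⟩
      rw [LinearMap.mem_ker]
      ext j
      exact (Submodule.Quotient.mk_eq_zero _).2 ⟨y j, rfl⟩
    · intro hx
      have h : ∀ j, x j ∈ LinearMap.range g := fun j =>
        (Submodule.Quotient.mk_eq_zero _).1 (congrFun (LinearMap.mem_ker.1 hx) j)
      choose y hy using h
      exact ⟨y, funext hy⟩
  exact Retr.of_equiv ((Submodule.quotEquivOfEq _ _ hk).trans (ψ.quotKerEquivOfSurjective hψ))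

theorem inj_prod {I J : Type u} [AddCommGroup I] [AddCommGroup J] [Module A I] [Module A J]
    (hI : Module.Injective A I) (hJ : Module.Injective A J) : Module.Injective A (I × J) := by
  constructor
  intro Z W _ _ _ _ f hf g
  obtain ⟨h, hh⟩ := hI.out f hf (LinearMap.fst A I J ∘ₗ g)
  obtain ⟨h', hh'⟩ := hJ.out f hf (LinearMap.snd A I J ∘ₗ g)
  exact ⟨h.prod h', fun x => Prod.ext (hh x) (hh' x)⟩

theorem coker_bracket {M J : ModuleCat.{u} A}
    (g : M →ₗ[A] J) (hg : Function.Injective g) (hJ : Module.Injective A J) {n : ℕ} :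
    ∀ {X I : ModuleCat.{u} A} {f : X →ₗ[A] I} (_ : IsInjectiveEnvelope A f)
      (_ : X ∈ bracket A M n),
      ModuleCat.of A (I ⧸ LinearMap.range f) ∈
        bracket A (ModuleCat.of A (J ⧸ LinearMap.range g)) n := by
  induction n with
  | zero =>
    intro X I f hf hX
    have : Subsingleton X := hX
    have : Retr A (I ⧸ LinearMap.range f)
        ((PUnit : Type u) ⧸ LinearMap.range (0 : X →ₗ[A] (PUnit : Type u))) := by
      refine retr_coker (J := ModuleCat.of A PUnit) hf _
        (fun _ _ _ => Subsingleton.elim _ _) ?_ Retr.refl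
      constructor
      intro Z W _ _ _ _ f hf g
      exact ⟨0, fun _ => Subsingleton.elim (α := (PUnit : Type u)) _ _⟩
    obtain ⟨i, p, h⟩ := this
    exact (Function.LeftInverse.injective h).subsingleton
  | succ n ih =>
    intro X I f hf hX
    obtain ⟨Y, M₁, M₂, m, h1, h2, h3, φ, ψ, hφ, hψ, hφψ⟩ := (bracket_succ_iff _ _ _).1 hX
    obtain ⟨J₁, e₁, he₁⟩ := exists_envelope M₁
    obtain ⟨J₂, e₂, he₂⟩ := exists_envelope M₂
    have i2 := ih he₂ h3
    have i1 : Retr A (J₁ ⧸ LinearMap.range e₁) (Fin m → J ⧸ LinearMap.range g) := by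
      refine (retr_coker (J := ModuleCat.of A (Fin m → J)) (Y := ModuleCat.of A (Fin m → M)) he₁
        (LinearMap.pi fun j : Fin m => g ∘ₗ LinearMap.proj j) ?_ ?_ h2).trans (coker_pi_retr g m)
      · intro x y h
        exact funext fun j => hg (congrFun h j)
      · exact Module.Injective.pi A (fun _ : Fin m => J)
    obtain ⟨hJ₁, hs₁, -⟩ := he₁
    obtain ⟨hJ₂, hs₂, -⟩ := he₂
    obtain ⟨l, hl⟩ := hJ₁.out φ hφ e₁
    let q : Y →ₗ[A] (J₁ × J₂) := LinearMap.prod l (e₂ ∘ₗ ψ)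
    have hq : ∀ y, q y = (l y, e₂ (ψ y)) := fun y => rfl
    have hψφ : ∀ x, ψ (φ x) = 0 := fun x => (hφψ _).2 ⟨x, rfl⟩
    have hqi : Function.Injective q := by
      rw [injective_iff_map_eq_zero]
      intro y hy
      rw [hq, Prod.mk_eq_zero] at hy
      have h0 : ψ y = 0 := hs₂ (by rw [hy.2, map_zero])
      obtain ⟨x, rfl⟩ := (hφψ _).1 h0
      rw [hl] at hy
      have h00 : x = 0 := hs₁ (by rw [hy.1, map_zero])
      rw [h00, map_zero]
    have hr : Retr A (I ⧸ LinearMap.range f) ((J₁ × J₂) ⧸ LinearMap.range q) :=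
      retr_coker (J := ModuleCat.of A (J₁ × J₂)) hf q hqi (inj_prod hJ₁ hJ₂) h1
    refine (bracket_succ_iff _ _ _).2 ⟨ModuleCat.of A ((J₁ × J₂) ⧸ LinearMap.range q),
      ModuleCat.of A (J₁ ⧸ LinearMap.range e₁), ModuleCat.of A (J₂ ⧸ LinearMap.range e₂), m, hr,
      i1, i2, Submodule.mapQ _ _ (LinearMap.inl A J₁ J₂) ?_,
      Submodule.mapQ _ _ (LinearMap.snd A J₁ J₂) ?_, ?_, ?_, ?_⟩
    · rintro _ ⟨x, rfl⟩
      refine ⟨φ x, ?_⟩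
      rw [hq, hl, hψφ, map_zero]
      rfl
    · rintro _ ⟨y, rfl⟩
      exact ⟨ψ y, rfl⟩
    · rw [injective_iff_map_eq_zero]
      intro x hx
      obtain ⟨x, rfl⟩ := Submodule.mkQ_surjective _ x
      rw [Submodule.mkQ_apply, Submodule.mapQ_apply] at hx
      obtain ⟨y, hy⟩ := (Submodule.Quotient.mk_eq_zero _).1 hx
      rw [hq] at hy
      have hy1 : l y = x := congrArg Prod.fst hy
      have hy2 : e₂ (ψ y) = 0 := congrArg Prod.snd hy
      have h0 : ψ y = 0 := hs₂ (by rw [hy2, map_zero])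
      obtain ⟨z, rfl⟩ := (hφψ _).1 h0
      rw [hl] at hy1
      exact (Submodule.Quotient.mk_eq_zero _).2 ⟨z, hy1⟩
    · intro z
      obtain ⟨z, rfl⟩ := Submodule.mkQ_surjective _ z
      exact ⟨Submodule.Quotient.mk (0, z), rfl⟩
    · intro z
      obtain ⟨⟨a, b⟩, rfl⟩ := Submodule.mkQ_surjective _ z
      rw [Submodule.mkQ_apply, Submodule.mapQ_apply]
      constructor
      · intro h
        obtain ⟨c, hc⟩ := (Submodule.Quotient.mk_eq_zero _).1 h
        obtain ⟨y, rfl⟩ := hψ c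
        have hc' : e₂ (ψ y) = b := hc
        refine ⟨Submodule.Quotient.mk (a - l y), ?_⟩
        rw [Submodule.mapQ_apply, Submodule.Quotient.eq]
        refine ⟨-y, ?_⟩
        rw [map_neg, hq, hc']
        simp
      · rintro ⟨x, hx⟩
        obtain ⟨x, rfl⟩ := Submodule.mkQ_surjective _ x
        rw [← Submodule.mapQ_apply (LinearMap.range q) (LinearMap.range e₂)
          (LinearMap.snd A J₁ J₂) (h := by rintro _ ⟨y, rfl⟩; exact ⟨ψ y, rfl⟩)]
        rw [← hx]
        rfl

end Injective

section DualLemmas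

variable {k : Type u} [CommRing k] [Algebra k A] {E₀ : Type u} [AddCommGroup E₀] [Module k E₀]

/-- The `A`-linear map to the coinduced module attached to a `k`-linear map. -/
def coind {Y : Type u} [AddCommGroup Y] [Module A Y] [Module k Y] [IsScalarTower k A Y]
    (φ : Y →ₗ[k] E₀) : Y →ₗ[A] (A →ₗ[k] E₀) where
  toFun y := φ ∘ₗ (LinearMap.toSpanSingleton A Y y).restrictScalars k
  map_add' x y := by
    ext a
    simp
  map_smul' b y := by
    ext a
    show φ (a • b • y) = φ ((a * b) • y)
    rw [mul_smul]

theorem coind_apply {Y : Type u} [AddCommGroup Y] [Module A Y] [Module k Y] [IsScalarTower k A Y]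
    (φ : Y →ₗ[k] E₀) (y : Y) (a : A) : coind φ y a = φ (a • y) := rfl

theorem dual_inj (hE : Module.Injective k E₀) : Module.Injective A (A →ₗ[k] E₀) := by
  constructor
  intro Z W _ _ _ _ f hf g
  let _ : Module k Z := Module.compHom Z (algebraMap k A)
  let _ : Module k W := Module.compHom W (algebraMap k A)
  have : IsScalarTower k A Z := IsScalarTower.of_algebraMap_smul fun _ _ => rfl
  have : IsScalarTower k A W := IsScalarTower.of_algebraMap_smul fun _ _ => rfl
  let ev : Z →ₗ[k] E₀ :=
    { toFun := fun z => g z 1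
      map_add' := fun x y => by rw [map_add]; rfl
      map_smul' := fun c x => by
        show g ((algebraMap k A c) • x) 1 = c • g x 1
        rw [map_smul]
        show g x (1 * algebraMap k A c) = c • g x 1
        rw [one_mul, Algebra.algebraMap_eq_smul_one, map_smul] }
  obtain ⟨h, hh⟩ := hE.out (f.restrictScalars k) hf ev
  refine ⟨coind h, fun x => ?_⟩
  ext a
  rw [coind_apply, ← map_smul]
  have h1 := hh (a • x)
  have h2 : ev (a • x) = g x (1 * a) := by
    show g (a • x) 1 = _
    rw [map_smul]
    rfl
  rw [h2, one_mul] at h1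
  exact h1

theorem exists_functional [IsArtinianRing k]
    {J : Ideal k} (hJ : J = Ideal.jacobson (⊥ : Ideal k)) (ι : (k ⧸ J) →ₗ[k] E₀) (hι : Function.Injective ι)
    (hE : Module.Injective k E₀) {Y : Type u} [AddCommGroup Y] [Module k Y] (y : Y) (hy : y ≠ 0) :
    ∃ φ : Y →ₗ[k] E₀, φ y ≠ 0 := by
  set T := LinearMap.toSpanSingleton k Y y with hT
  have hTne : LinearMap.ker T ≠ ⊤ := by
    intro h
    have h1 : (1 : k) ∈ LinearMap.ker T := by rw [h]; trivial
    rw [LinearMap.mem_ker] at h1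
    simp [hT] at h1
    exact hy h1
  obtain ⟨m, hm, hTm⟩ := Ideal.exists_le_maximal _ hTne
  have hss : IsSemisimpleRing (k ⧸ J) := by
    rw [hJ, Ideal.jacobson_bot]
    infer_instance
  have hJm : J ≤ m := by
    rw [hJ, Ideal.jacobson]
    exact sInf_le ⟨bot_le, hm⟩
  obtain ⟨m', hm'⟩ := exists_isCompl (m.map (Ideal.Quotient.mk J))
  have hmne : m.map (Ideal.Quotient.mk J) ≠ ⊤ := by
    intro h
    have h1 : Ideal.Quotient.mk J 1 ∈ m.map (Ideal.Quotient.mk J) := by rw [h]; trivial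
    rw [Ideal.mem_quotient_iff_mem hJm] at h1
    exact hm.ne_top ((Ideal.eq_top_iff_one _).2 h1)
  have hm'ne : m' ≠ ⊥ := by
    rintro rfl
    exact hmne (by simpa using hm'.sup_eq_top)
  obtain ⟨x, hx, hx0⟩ := (Submodule.ne_bot_iff _).1 hm'ne
  have hmx : ∀ a ∈ m, a • x = 0 := by
    intro a ha
    have h1 : Ideal.Quotient.mk J a * x ∈ m.map (Ideal.Quotient.mk J) ⊓ m' :=
      ⟨Ideal.mul_mem_right _ _ (Ideal.mem_map_of_mem _ ha), Ideal.mul_mem_left _ _ hx⟩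
    rw [hm'.inf_eq_bot] at h1
    rw [Algebra.smul_def]
    exact h1
  let ψ : (k ⧸ LinearMap.ker T) →ₗ[k] E₀ :=
    (LinearMap.ker T).liftQ (ι ∘ₗ LinearMap.toSpanSingleton k (k ⧸ J) x) (by
      intro a ha
      simp only [LinearMap.mem_ker, LinearMap.comp_apply, LinearMap.toSpanSingleton_apply]
      rw [hmx a (hTm ha), map_zero])
  let θ : (k ⧸ LinearMap.ker T) →ₗ[k] Y := (LinearMap.ker T).liftQ T le_rfl
  have hθ : Function.Injective θ := by
    rw [← LinearMap.ker_eq_bot]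
    exact Submodule.ker_liftQ_eq_bot _ _ _ le_rfl
  obtain ⟨φ, hφ⟩ := hE.out θ hθ ψ
  refine ⟨φ, fun h => hx0 (hι ?_)⟩
  have h1 := hφ (Submodule.Quotient.mk 1)
  have h2 : θ (Submodule.Quotient.mk 1) = y := one_smul k y
  have h3 : ψ (Submodule.Quotient.mk 1) = ι x :=
    congrArg ι (one_smul k x)
  rw [h2, h3, h] at h1
  rw [← h1, map_zero]

theorem exists_embed [IsArtinianRing k] [IsArtinianRing A]
    (ι : (k ⧸ Ideal.jacobson (⊥ : Ideal k)) →ₗ[k] E₀) (hι : Function.Injective ι)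
    (hE : Module.Injective k E₀) (Y : Type u) [AddCommGroup Y] [Module A Y] [Module.Finite A Y] :
    ∃ (m : ℕ) (j : Y →ₗ[A] (Fin m → (A →ₗ[k] E₀))), Function.Injective j := by
  let _ : Module k Y := Module.compHom Y (algebraMap k A)
  have : IsScalarTower k A Y := IsScalarTower.of_algebraMap_smul fun _ _ => rfl
  obtain ⟨s, hs⟩ := Finset.exists_inf_le
    (fun F : Y →ₗ[A] (A →ₗ[k] E₀) => LinearMap.ker F)
  refine ⟨s.card, LinearMap.pi fun i => (s.equivFin.symm i : Y →ₗ[A] (A →ₗ[k] E₀)), ?_⟩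
  rw [injective_iff_map_eq_zero]
  intro y hy
  by_contra hne
  obtain ⟨φ, hφ⟩ := exists_functional rfl ι hι hE y hne
  have hmem : y ∈ s.inf (fun F : Y →ₗ[A] (A →ₗ[k] E₀) => LinearMap.ker F) := by
    rw [Submodule.mem_finsetInf]
    intro F hF
    have := congrFun hy (s.equivFin ⟨F, hF⟩)
    simpa using this
  have h1 : coind φ y = 0 := hs (coind φ) hmem
  have h2 := LinearMap.congr_fun h1 1
  rw [coind_apply, one_smul] at h2
  exact hφ h2

theorem envelope_retr [IsArtinianRing k] [IsArtinianRing A]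
    (ι : (k ⧸ Ideal.jacobson (⊥ : Ideal k)) →ₗ[k] E₀) (hι : Function.Injective ι)
    (hE : Module.Injective k E₀) {Y I : ModuleCat.{u} A} [Module.Finite A Y]
    {g : Y →ₗ[A] I} (hg : IsInjectiveEnvelope A g) :
    ∃ m : ℕ, Retr A I (Fin m → (A →ₗ[k] E₀)) := by
  obtain ⟨m, j, hj⟩ := exists_embed (A := A) ι hι hE Y
  obtain ⟨hI, hgi, hess⟩ := hg
  have hDA : Module.Injective A (A →ₗ[k] E₀) := dual_inj hE
  have hD : Module.Injective A (Fin m → (A →ₗ[k] E₀)) :=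
    Module.Injective.pi A (fun _ : Fin m => (A →ₗ[k] E₀))
  obtain ⟨a, ha⟩ := hD.out g hgi j
  have hai : Function.Injective a := by
    rw [← LinearMap.ker_eq_bot]
    by_contra hne
    refine hess _ hne (eq_bot_iff.2 ?_)
    rintro _ ⟨h1, ⟨x, rfl⟩⟩
    have h1 : a (g x) = 0 := h1
    rw [ha] at h1
    have : x = 0 := hj (by rw [h1, map_zero])
    rw [this, map_zero]
    exact Submodule.zero_mem _
  obtain ⟨b, hb⟩ := hI.out a hai LinearMap.id
  exact ⟨m, a, b, hb⟩

end DualLemmas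

section Chains

/-- Not necessarily minimal syzygies. -/
def IsSyz (A : Type u) [Ring A] : ℕ → ModuleCat.{u} A → ModuleCat.{u} A → Prop
  | 0, X, S => Nonempty (S ≃ₗ[A] X)
  | n + 1, X, S => ∃ (P : ModuleCat.{u} A) (f : P →ₗ[A] X), Module.Finite A P ∧
      Module.Projective A P ∧ Function.Surjective f ∧
      IsSyz A n (ModuleCat.of A (LinearMap.ker f)) S

/-- Not necessarily minimal cosyzygies. -/
def IsCosyz (A : Type u) [Ring A] : ℕ → ModuleCat.{u} A → ModuleCat.{u} A → Prop
  | 0, X, S => Nonempty (S ≃ₗ[A] X)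
  | n + 1, X, S => ∃ (I : ModuleCat.{u} A) (g : X →ₗ[A] I), Module.Injective A I ∧
      Function.Injective g ∧ IsCosyz A n (ModuleCat.of A (I ⧸ LinearMap.range g)) S

theorem isSyz_of_min {n : ℕ} : ∀ {X S : ModuleCat.{u} A}, IsMinimalSyzygy A n X S →
    IsSyz A n X S := by
  induction n with
  | zero => exact fun h => h
  | succ n ih =>
    rintro X S ⟨P, f, ⟨h1, h2, h3, -⟩, h⟩
    exact ⟨P, f, h1, h2, h3, ih h⟩

theorem isCosyz_of_min {n : ℕ} : ∀ {X S : ModuleCat.{u} A}, IsMinimalCosyzygy A n X S →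
    IsCosyz A n X S := by
  induction n with
  | zero => exact fun h => h
  | succ n ih =>
    rintro X S ⟨P, f, ⟨h1, h2, -⟩, h⟩
    exact ⟨P, f, h1, h2, ih h⟩

theorem isSyz_equiv {n : ℕ} {X Y S : ModuleCat.{u} A} (e : X ≃ₗ[A] Y)
    (h : IsSyz A n X S) : IsSyz A n Y S := by
  cases n with
  | zero =>
    obtain ⟨e'⟩ := h
    exact ⟨e'.trans e⟩
  | succ n =>
    obtain ⟨P, f, h1, h2, h3, h⟩ := h
    refine ⟨P, e.toLinearMap ∘ₗ f, h1, h2, e.surjective.comp h3, ?_⟩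
    rw [LinearEquiv.ker_comp]
    exact h

theorem isCosyz_equiv {n : ℕ} {X Y S : ModuleCat.{u} A} (e : X ≃ₗ[A] Y)
    (h : IsCosyz A n X S) : IsCosyz A n Y S := by
  cases n with
  | zero =>
    obtain ⟨e'⟩ := h
    exact ⟨e'.trans e⟩
  | succ n =>
    obtain ⟨P, f, h1, h2, h⟩ := h
    refine ⟨P, f ∘ₗ e.symm.toLinearMap, h1, h2.comp e.symm.injective, ?_⟩
    rw [LinearMap.range_comp_of_range_eq_top _ e.symm.range]
    exact h

theorem isSyz_prod {n : ℕ} : ∀ {X Y S T : ModuleCat.{u} A}, IsSyz A n X S → IsSyz A n Y T →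
    IsSyz A n (ModuleCat.of A (X × Y)) (ModuleCat.of A (S × T)) := by
  induction n with
  | zero =>
    rintro X Y S T ⟨e⟩ ⟨e'⟩
    exact ⟨LinearEquiv.prodCongr e e'⟩
  | succ n ih =>
    rintro X Y S T ⟨P, f, h1, h2, h3, h⟩ ⟨Q, g, h1', h2', h3', h'⟩
    refine ⟨ModuleCat.of A (P × Q), f.prodMap g, ?_, ?_, ?_, isSyz_equiv ?_ (ih h h')⟩
    · show Module.Finite A (P × Q)
      infer_instance
    · show Module.Projective A (P × Q)
      infer_instance
    · exact h3.prodMap h3'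
    · refine LinearEquiv.ofBijective (LinearMap.codRestrict (LinearMap.ker (f.prodMap g))
        ((LinearMap.ker f).subtype.prodMap (LinearMap.ker g).subtype) ?_) ⟨?_, ?_⟩
      · rintro ⟨⟨x, hx⟩, ⟨y, hy⟩⟩
        exact Prod.ext hx hy
      · rintro ⟨⟨x, hx⟩, ⟨y, hy⟩⟩ ⟨⟨x', hx'⟩, ⟨y', hy'⟩⟩ h
        have h0 := congrArg Subtype.val h
        exact Prod.ext (Subtype.ext (congrArg Prod.fst h0)) (Subtype.ext (congrArg Prod.snd h0))
      · rintro ⟨⟨x, y⟩, h⟩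
        exact ⟨⟨⟨x, congrArg Prod.fst h⟩, ⟨y, congrArg Prod.snd h⟩⟩, rfl⟩

theorem isCosyz_prod {n : ℕ} : ∀ {X Y S T : ModuleCat.{u} A}, IsCosyz A n X S →
    IsCosyz A n Y T → IsCosyz A n (ModuleCat.of A (X × Y)) (ModuleCat.of A (S × T)) := by
  induction n with
  | zero =>
    rintro X Y S T ⟨e⟩ ⟨e'⟩
    exact ⟨LinearEquiv.prodCongr e e'⟩
  | succ n ih =>
    rintro X Y S T ⟨P, f, h1, h2, h⟩ ⟨Q, g, h1', h2', h'⟩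
    refine ⟨ModuleCat.of A (P × Q), f.prodMap g, inj_prod h1 h1', h2.prodMap h2',
      isCosyz_equiv ?_ (ih h h')⟩
    have hk : LinearMap.ker ((LinearMap.range f).mkQ.prodMap (LinearMap.range g).mkQ) =
        LinearMap.range (f.prodMap g) := by
      rw [LinearMap.ker_prodMap, LinearMap.range_prodMap, Submodule.ker_mkQ, Submodule.ker_mkQ]
    exact ((Submodule.quotEquivOfEq _ _ hk.symm).trans
      (((LinearMap.range f).mkQ.prodMap (LinearMap.range g).mkQ).quotKerEquivOfSurjective
      ((Submodule.mkQ_surjective _).prodMap (Submodule.mkQ_surjective _)))).symm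

theorem cosyz_last {s : ℕ} : ∀ {X C : ModuleCat.{u} A}, IsMinimalCosyzygy A (s + 1) X C →
    ∃ Y, IsMinimalCosyzygy A s X Y ∧ ∃ (I : ModuleCat.{u} A) (g : Y →ₗ[A] I),
      IsInjectiveEnvelope A g ∧ Nonempty (C ≃ₗ[A] (I ⧸ LinearMap.range g)) := by
  induction s with
  | zero =>
    rintro X C ⟨I, g, hg, h⟩
    exact ⟨X, ⟨LinearEquiv.refl A X⟩, I, g, hg, h⟩
  | succ s ih =>
    rintro X C ⟨I, g, hg, h⟩
    obtain ⟨Y, hY, r⟩ := ih h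
    exact ⟨Y, ⟨I, g, hg, hY⟩, r⟩

theorem syz_last {s : ℕ} : ∀ {X C : ModuleCat.{u} A}, IsMinimalSyzygy A (s + 1) X C →
    ∃ Y, IsMinimalSyzygy A s X Y ∧ ∃ (P : ModuleCat.{u} A) (f : P →ₗ[A] Y),
      IsProjectiveCover A f ∧ Nonempty (C ≃ₗ[A] LinearMap.ker f) := by
  induction s with
  | zero =>
    rintro X C ⟨I, g, hg, h⟩
    exact ⟨X, ⟨LinearEquiv.refl A X⟩, I, g, hg, h⟩
  | succ s ih =>
    rintro X C ⟨I, g, hg, h⟩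
    obtain ⟨Y, hY, r⟩ := ih h
    exact ⟨Y, ⟨I, g, hg, hY⟩, r⟩

theorem cosyz_fin {D : ModuleCat.{u} A}
    (hD : ∀ (Y I : ModuleCat.{u} A) (_ : Module.Finite A Y) (g : Y →ₗ[A] I),
      IsInjectiveEnvelope A g → ∃ m : ℕ, Retr A I (Fin m → D)) {s : ℕ}
    (hs : 1 ≤ s → Module.Finite A D) : ∀ {X Y : ModuleCat.{u} A} (_ : Module.Finite A X),
    IsMinimalCosyzygy A s X Y → Module.Finite A Y := by
  induction s with
  | zero =>
    rintro X Y hX ⟨e⟩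
    exact Module.Finite.equiv e.symm
  | succ s ih =>
    rintro X Y hX ⟨I, g, hg, h⟩
    have := hs (by omega)
    obtain ⟨m, hm⟩ := hD _ _ hX g hg
    have := hm.fin
    refine ih (fun _ => hs (by omega)) ?_ h
    show Module.Finite A (I ⧸ LinearMap.range g)
    infer_instance

theorem retr_left {S D : Type u} [AddCommGroup S] [AddCommGroup D] [Module A S] [Module A D] :
    Retr A S (Fin 1 → S × D) :=
  Retr.trans ⟨LinearMap.inl A S D, LinearMap.fst A S D, fun _ => rfl⟩ Retr.pi_one

theorem retr_right {S D : Type u} [AddCommGroup S] [AddCommGroup D] [Module A S] [Module A D] :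
    Retr A D (Fin 1 → S × D) :=
  Retr.trans ⟨LinearMap.inr A S D, LinearMap.snd A S D, fun _ => rfl⟩ Retr.pi_one

theorem retr_snoc {S : Type u} [AddCommGroup S] [Module A S] {s : ℕ}
    (D : Fin (s + 1) → ModuleCat.{u} A) :
    Retr A ((S × D (Fin.last s)) × ((i : Fin s) → D i.castSucc))
      (S × ((i : Fin (s + 1)) → D i)) := by
  let Dom := (S × D (Fin.last s)) × ((i : Fin s) → D i.castSucc)
  refine ⟨LinearMap.prod (LinearMap.fst A S _ ∘ₗ LinearMap.fst A _ _)
    (LinearMap.pi fun j => Fin.lastCases (motive := fun j => Dom →ₗ[A] D j)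
      (LinearMap.snd A S _ ∘ₗ LinearMap.fst A _ _)
      (fun i => LinearMap.proj i ∘ₗ LinearMap.snd A _ _) j),
    LinearMap.prod (LinearMap.prod (LinearMap.fst A S _)
      (LinearMap.proj (Fin.last s) ∘ₗ LinearMap.snd A S _))
      (LinearMap.pi fun i => LinearMap.proj i.castSucc ∘ₗ LinearMap.snd A S _), ?_⟩
  rintro ⟨⟨a, b⟩, c⟩
  refine Prod.ext (Prod.ext rfl ?_) (funext fun i => ?_)
  · simp
  · simp

theorem step2 [IsArtinianRing A] {M Q Y I D : ModuleCat.{u} A} [Module.Finite A M]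
    (q : Q →ₗ[A] M) (hq : Function.Surjective q) (hQ : Module.Projective A Q)
    (g : Y →ₗ[A] I) (hg : Function.Injective g) {m : ℕ} (hI : Retr A I (Fin m → D)) {n : ℕ}
    (hC : ModuleCat.of A (I ⧸ LinearMap.range g) ∈ bracket A M (n + 1)) :
    Y ∈ bracket A (ModuleCat.of A (LinearMap.ker q × D)) (n + 1 + 1) := by
  have := bracket_fin hC
  obtain ⟨P, p, hp⟩ := exists_cover (ModuleCat.of A (I ⧸ LinearMap.range g))
  have hK := ker_bracket q hq hQ hp hC
  replace hK : ModuleCat.of A (LinearMap.ker p) ∈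
      bracket A (ModuleCat.of A (LinearMap.ker q × D)) (n + 1) := bracket_gen retr_left hK
  obtain ⟨-, hP, hps, -⟩ := hp
  have hI' : I ∈ bracket A (ModuleCat.of A (LinearMap.ker q × D)) 1 :=
    bracket_gen (M := D) retr_right (bracket_one hI)
  obtain ⟨l, hl⟩ := Module.projective_lifting_property (LinearMap.range g).mkQ p
    (Submodule.mkQ_surjective _)
  replace hl : ∀ x, (LinearMap.range g).mkQ (l x) = p x := fun x => LinearMap.congr_fun hl x
  let φ : (Y × P) →ₗ[A] I := LinearMap.coprod g l
  have hφ : ∀ y x, φ (y, x) = g y + l x := fun _ _ => rfl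
  have hmk : ∀ y, (LinearMap.range g).mkQ (g y) = 0 := fun y =>
    (Submodule.Quotient.mk_eq_zero _).2 ⟨y, rfl⟩
  have hφs : Function.Surjective φ := by
    intro i
    obtain ⟨x, hx⟩ := hps ((LinearMap.range g).mkQ i)
    rw [← hl] at hx
    obtain ⟨y, hy⟩ := (Submodule.Quotient.eq _).1 hx.symm
    exact ⟨(y, x), by rw [hφ, hy, sub_add_cancel]⟩
  have hK' : ModuleCat.of A (LinearMap.ker φ) ∈
      bracket A (ModuleCat.of A (LinearMap.ker q × D)) (n + 1) := by
    refine bracket_retr (Retr.of_equiv (LinearEquiv.ofBijective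
      (LinearMap.restrict (p := LinearMap.ker φ) (q := LinearMap.ker p)
        (LinearMap.snd A Y P) ?_) ⟨?_, ?_⟩)) hK
    · rintro ⟨y, x⟩ h
      rw [LinearMap.mem_ker, hφ] at h
      have h1 := congrArg (LinearMap.range g).mkQ h
      rw [map_add, hmk, zero_add, hl, map_zero] at h1
      exact h1
    · rw [injective_iff_map_eq_zero]
      rintro ⟨⟨y, x⟩, h⟩ h0
      have hx : x = 0 := congrArg Subtype.val h0
      subst hx
      rw [LinearMap.mem_ker, hφ, map_zero, add_zero] at h
      have hy : y = 0 := hg (by rw [h, map_zero])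
      subst hy
      rfl
    · rintro ⟨x, hx⟩
      rw [LinearMap.mem_ker, ← hl] at hx
      obtain ⟨y, hy⟩ := (Submodule.Quotient.mk_eq_zero _).1 hx
      refine ⟨⟨(-y, x), ?_⟩, rfl⟩
      rw [LinearMap.mem_ker, hφ, map_neg, hy, neg_add_cancel]
  have := bracket_ext (Z := ModuleCat.of A (Y × P)) hI' hK' (LinearMap.ker φ).subtype φ
    (Submodule.injective_subtype _) hφs (fun z => by
      constructor
      · intro hz
        exact ⟨⟨z, hz⟩, rfl⟩
      · rintro ⟨x, rfl⟩
        exact x.2)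
  exact bracket_retr (Y := ModuleCat.of A (Y × P))
    ⟨LinearMap.inl A Y P, LinearMap.fst A Y P, fun _ => rfl⟩ this

theorem step3 {M J Y P : ModuleCat.{u} A}
    (q : M →ₗ[A] J) (hq : Function.Injective q) (hJ : Module.Injective A J)
    (f : P →ₗ[A] Y) (hf : Function.Surjective f) (hP : Module.Projective A P)
    (hPf : Module.Finite A P) {n : ℕ}
    (hC : ModuleCat.of A (LinearMap.ker f) ∈ bracket A M (n + 1)) :
    Y ∈ bracket A (ModuleCat.of A ((J ⧸ LinearMap.range q) × A)) (n + 1 + 1) := by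
  obtain ⟨E, e, he⟩ := exists_envelope (ModuleCat.of A (LinearMap.ker f))
  have hK := coker_bracket q hq hJ he hC
  replace hK : ModuleCat.of A (E ⧸ LinearMap.range e) ∈
      bracket A (ModuleCat.of A ((J ⧸ LinearMap.range q) × A)) (n + 1) :=
    bracket_gen retr_left hK
  obtain ⟨hE, hei, -⟩ := he
  have hP' : P ∈ bracket A (ModuleCat.of A ((J ⧸ LinearMap.range q) × A)) 1 := by
    obtain ⟨m, t, ht⟩ := Module.Finite.exists_fin' A P
    obtain ⟨r, hr⟩ := Module.projective_lifting_property t LinearMap.id ht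
    exact bracket_gen (M := ModuleCat.of A A) retr_right
      (bracket_one (m := m) ⟨r, t, fun x => LinearMap.congr_fun hr x⟩)
  obtain ⟨h, hh⟩ := hE.out (LinearMap.ker f).subtype (Submodule.injective_subtype _) e
  replace hh : ∀ x (hx : f x = 0), h x = e ⟨x, hx⟩ := fun x hx => hh ⟨x, hx⟩
  let φ : P →ₗ[A] (Y × E) := LinearMap.prod f h
  have hφ : ∀ x, φ x = (f x, h x) := fun _ => rfl
  have hφi : Function.Injective φ := by
    rw [injective_iff_map_eq_zero]
    intro x hx
    rw [hφ, Prod.mk_eq_zero] at hx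
    rw [hh x hx.1] at hx
    have h0 : (⟨x, hx.1⟩ : LinearMap.ker f) = 0 := hei (hx.2.trans (map_zero e).symm)
    exact congrArg Subtype.val h0
  have hW : ModuleCat.of A ((Y × E) ⧸ LinearMap.range φ) ∈
      bracket A (ModuleCat.of A ((J ⧸ LinearMap.range q) × A)) (n + 1) := by
    refine bracket_retr (Retr.of_equiv (LinearEquiv.ofBijective
      (Submodule.mapQ (LinearMap.range e) (LinearMap.range φ) (LinearMap.inr A Y E) ?_)
        ⟨?_, ?_⟩).symm) hK
    · rintro _ ⟨⟨x, hx⟩, rfl⟩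
      refine ⟨x, ?_⟩
      rw [hφ, hh x hx, LinearMap.mem_ker.1 hx]
      rfl
    · rw [injective_iff_map_eq_zero]
      intro z hz
      obtain ⟨z, rfl⟩ := Submodule.mkQ_surjective _ z
      rw [Submodule.mkQ_apply, Submodule.mapQ_apply] at hz
      obtain ⟨x, hx⟩ := (Submodule.Quotient.mk_eq_zero _).1 hz
      have h1 : f x = 0 := congrArg Prod.fst hx
      have h2 : h x = z := congrArg Prod.snd hx
      rw [hh x h1] at h2
      exact (Submodule.Quotient.mk_eq_zero _).2 ⟨_, h2⟩
    · intro z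
      obtain ⟨⟨y, z⟩, rfl⟩ := Submodule.mkQ_surjective _ z
      obtain ⟨x, rfl⟩ := hf y
      refine ⟨Submodule.Quotient.mk (z - h x), ?_⟩
      rw [Submodule.mapQ_apply, Submodule.mkQ_apply, Submodule.Quotient.eq]
      refine ⟨-x, ?_⟩
      rw [map_neg, hφ]
      simp
  have := bracket_ext (Z := ModuleCat.of A (Y × E)) hW hP' φ (LinearMap.range φ).mkQ
    hφi (Submodule.mkQ_surjective _) (fun z => Submodule.Quotient.mk_eq_zero _)
  rw [show 1 + (n + 1) = n + 1 + 1 by omega] at this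
  exact bracket_retr (Y := ModuleCat.of A (Y × E))
    ⟨LinearMap.inl A Y E, LinearMap.fst A Y E, fun _ => rfl⟩ this

theorem part1_syz [IsArtinianRing A] {n s : ℕ} : ∀ {M X : ModuleCat.{u} A}
    (_ : Module.Finite A M) (_ : X ∈ bracket A M n) {S SM : ModuleCat.{u} A},
    IsMinimalSyzygy A s X S → IsMinimalSyzygy A s M SM → S ∈ bracket A SM n := by
  induction s with
  | zero =>
    rintro M X hM hX S SM ⟨e⟩ ⟨e'⟩
    exact bracket_gen ((Retr.of_equiv e'.symm).trans Retr.pi_one)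
      (bracket_retr (Retr.of_equiv e) hX)
  | succ s ih =>
    rintro M X hM hX S SM ⟨P, f, hf, h⟩ ⟨Q, g, hg, h'⟩
    refine ih ?_ (ker_bracket g hg.2.2.1 hg.2.1 hf hX) h h'
    have := hg.1
    show Module.Finite A (LinearMap.ker g)
    infer_instance

theorem part1_cosyz {n s : ℕ} : ∀ {M X : ModuleCat.{u} A}
    (_ : X ∈ bracket A M n) {S SM : ModuleCat.{u} A},
    IsMinimalCosyzygy A s X S → IsMinimalCosyzygy A s M SM → S ∈ bracket A SM n := by
  induction s with
  | zero =>
    rintro M X hX S SM ⟨e⟩ ⟨e'⟩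
    exact bracket_gen ((Retr.of_equiv e'.symm).trans Retr.pi_one)
      (bracket_retr (Retr.of_equiv e) hX)
  | succ s ih =>
    rintro M X hX S SM ⟨P, f, hf, h⟩ ⟨Q, g, hg, h'⟩
    exact ih (coker_bracket g hg.2.1 hg.1 hf hX) h h'

theorem part2 [IsArtinianRing A] {DA : ModuleCat.{u} A}
    (hDA : ∀ (Y I : ModuleCat.{u} A) (_ : Module.Finite A Y) (g : Y →ₗ[A] I),
      IsInjectiveEnvelope A g → ∃ m : ℕ, Retr A I (Fin m → DA))
    {X : ModuleCat.{u} A} (hX : Module.Finite A X) {s : ℕ} :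
    ∀ {n : ℕ} {M : ModuleCat.{u} A} (_ : 1 ≤ s → Module.Finite A M)
    (_ : 2 ≤ s → Module.Finite A DA)
    {CX : ModuleCat.{u} A} (_ : IsMinimalCosyzygy A s X CX) (_ : CX ∈ bracket A M (n + 1))
    {SM : ModuleCat.{u} A} (_ : IsSyz A s M SM) (D : Fin s → ModuleCat.{u} A)
    (_ : ∀ i : Fin s, IsSyz A (i : ℕ) DA (D i)),
    X ∈ bracket A (ModuleCat.of A (SM × ((i : Fin s) → D i))) (n + s + 1) := by
  induction s with
  | zero =>
    rintro n M - - CX ⟨e⟩ hCX SM ⟨e'⟩ D -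
    exact bracket_gen ((Retr.of_equiv e'.symm).trans retr_left)
      (bracket_retr (Retr.of_equiv e.symm) hCX)
  | succ s ih =>
    rintro n M hM hD CX hc hCX SM ⟨Q, q, hQf, hQ, hq, hSM⟩ D hDs
    obtain ⟨Y, hY, I, g, hg, ⟨e⟩⟩ := cosyz_last hc
    have hYf : Module.Finite A Y := cosyz_fin hDA (fun h => hD (by omega)) hX hY
    obtain ⟨m, hm⟩ := hDA _ _ hYf g hg
    have hMf := hM (by omega)
    have h2 := step2 q hq hQ g hg.2.1 hm (n := n) (bracket_retr (Retr.of_equiv e.symm) hCX)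
    have h3 := ih (n := n + 1) (M := ModuleCat.of A (LinearMap.ker q × DA)) (fun hs => by
        have := hD (by omega)
        show Module.Finite A (LinearMap.ker q × DA)
        infer_instance) (fun hs => hD (by omega)) hY h2
      (isSyz_prod hSM (hDs (Fin.last s))) (fun i => D i.castSucc) (fun i => hDs i.castSucc)
    rw [show n + (s + 1) + 1 = n + 1 + s + 1 by omega]
    exact bracket_gen ((retr_snoc D).trans Retr.pi_one) h3

theorem part3 {X : ModuleCat.{u} A} {s : ℕ} :
    ∀ {n : ℕ} {M : ModuleCat.{u} A}
    {SX : ModuleCat.{u} A} (_ : IsMinimalSyzygy A s X SX) (_ : SX ∈ bracket A M (n + 1))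
    {CM : ModuleCat.{u} A} (_ : IsCosyz A s M CM) (C : Fin s → ModuleCat.{u} A)
    (_ : ∀ i : Fin s, IsCosyz A (i : ℕ) (ModuleCat.of A A) (C i)),
    X ∈ bracket A (ModuleCat.of A (CM × ((i : Fin s) → C i))) (n + s + 1) := by
  induction s with
  | zero =>
    rintro n M CX ⟨e⟩ hCX SM ⟨e'⟩ D -
    exact bracket_gen ((Retr.of_equiv e'.symm).trans retr_left)
      (bracket_retr (Retr.of_equiv e.symm) hCX)
  | succ s ih =>
    rintro n M SX hc hSX CM ⟨J, q, hJ, hq, hCM⟩ C hCs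
    obtain ⟨Y, hY, P, f, hf, ⟨e⟩⟩ := syz_last hc
    have h2 := step3 q hq hJ f hf.2.2.1 hf.2.1 hf.1 (n := n)
      (bracket_retr (Retr.of_equiv e.symm) hSX)
    have h3 := ih (n := n + 1) hY h2 (isCosyz_prod hCM (hCs (Fin.last s)))
      (fun i => C i.castSucc) (fun i => hCs i.castSucc)
    rw [show n + (s + 1) + 1 = n + 1 + s + 1 by omega]
    exact bracket_gen ((retr_snoc C).trans Retr.pi_one) h3

end Chains

end Helpers

section Statement

variable (k : Type u) [CommRing k] [IsArtinianRing k]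
variable (A : Type u) [Ring A] [Algebra k A] [Module.Finite k A]
variable (E₀ : Type u) [AddCommGroup E₀] [Module k E₀]

/-- **Lemma (syzygies, cosyzygies and the brackets `[M]ₙ`)**: let `A` be an Artin algebra
over a commutative Artinian ring `k`, `D = Hom_k(−, E(k/rad k))` the standard duality, and
`M`, `X` finitely generated `A`-modules, `n, s ≥ 0`. Then
(1) if `X ∈ [M]_{n+1}`, then `Ω^s(X) ∈ [Ω^s(M)]_{n+1}` and `Ω^{-s}(X) ∈ [Ω^{-s}(M)]_{n+1}`;
(2) if `Ω^{-s}(X) ∈ [M]_{n+1}`, then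
    `X ∈ [Ω^s(M) ⊕ (⊕_{i=0}^{s-1} Ω^i(D(A)))]_{n+s+1}`;
(3) if `Ω^s(X) ∈ [M]_{n+1}`, then
    `X ∈ [Ω^{-s}(M) ⊕ (⊕_{i=0}^{s-1} Ω^{-i}(A))]_{n+s+1}`.
Here `E₀`, together with `ι`, is an injective envelope `E(k/rad k)` of `k/rad k`, so that
`D(A) = Hom_k(A, E₀)`. -/
theorem bracket_syzygy_relations
    (M X : ModuleCat.{u} A) (hM : Module.Finite A M) (hX : Module.Finite A X) (n s : ℕ)
    (ι : ↥(ModuleCat.of k (k ⧸ Ideal.jacobson (⊥ : Ideal k))) →ₗ[k] ↥(ModuleCat.of k E₀))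
    (hι : IsInjectiveEnvelope k ι) :
    (X ∈ bracket A M (n + 1) →
      (∀ S SM, IsMinimalSyzygy A s X S → IsMinimalSyzygy A s M SM →
        S ∈ bracket A SM (n + 1)) ∧
      (∀ S SM, IsMinimalCosyzygy A s X S → IsMinimalCosyzygy A s M SM →
        S ∈ bracket A SM (n + 1))) ∧
    (∀ CX, IsMinimalCosyzygy A s X CX → CX ∈ bracket A M (n + 1) →
      ∀ SM, IsMinimalSyzygy A s M SM →
      ∀ D : Fin s → ModuleCat.{u} A,
        (∀ i : Fin s, IsMinimalSyzygy A (i : ℕ) (ModuleCat.of A (A →ₗ[k] E₀)) (D i)) →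
        X ∈ bracket A (ModuleCat.of A (↥SM × ((i : Fin s) → ↥(D i)))) (n + s + 1)) ∧
    (∀ SX, IsMinimalSyzygy A s X SX → SX ∈ bracket A M (n + 1) →
      ∀ CM, IsMinimalCosyzygy A s M CM →
      ∀ C : Fin s → ModuleCat.{u} A,
        (∀ i : Fin s, IsMinimalCosyzygy A (i : ℕ) (ModuleCat.of A A) (C i)) →
        X ∈ bracket A (ModuleCat.of A (↥CM × ((i : Fin s) → ↥(C i)))) (n + s + 1)) := by
  have hA : IsArtinianRing A := IsArtinianRing.of_finite k A
  obtain ⟨hE, hιi, -⟩ := hι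
  refine ⟨fun hXM => ⟨fun S SM h h' => part1_syz hM hXM h h',
    fun S SM h h' => part1_cosyz hXM h h'⟩, ?_, ?_⟩
  · intro CX hc hCX SM hSM D hD
    refine part2 (DA := ModuleCat.of A (A →ₗ[k] E₀)) ?_ hX (fun _ => hM) ?_ hc hCX
      (isSyz_of_min hSM) D (fun i => isSyz_of_min (hD i))
    · intro Y I hY g hg
      exact envelope_retr ι hιi hE hg
    · intro hs
      obtain ⟨P, f, hf, -⟩ := hD ⟨1, by omega⟩
      have := hf.1
      exact Module.Finite.of_surjective f hf.2.2.1
  · intro SX hs hSX CM hCM C hC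
    exact part3 hs hSX (isCosyz_of_min hCM) C (fun i => isCosyz_of_min (hC i))

end Statement

end ExtDim
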